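/- Let ε, E_u, σ, L, N_ZC, N_RS, N_SC, α_i be positive real numbers, K ≥ 1 a natural number, and α_1, …, α_K positive real numbers. Define A := Σ_{q=1}^K (α_q/α_i) and B := Σ_{q=1}^K (α_q/α_i²). For each real M > 0 define γ_d(M) := ( B/(M·N_RS) + L/(√M·E_u·N_RS²·N_ZC·α_i²) ) / ( 1/ε − A/M − L/(√M·E_u·N_RS·N_ZC·α_i) ) and P_T(M) := (N_SC·σ²/N_RS)·γ_d(M). Then √M·P_T(M) tends to the positive constant L·N_SC·ε·σ² / (E_u·N_RS³·N_ZC·α_i²) as M → ∞. -/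

import Mathlib

open Filter

/-- Proposition 2: with the per-user uplink power scaled as `1/√M`, the total
downlink RAR beamforming power `P_T(M)` obtained from solving the SINR equation
for the target `ε` satisfies `√M · P_T(M) → L N_SC ε σ² / (E_u N_RS³ N_ZC α_i²)`
as the number of BS antennas `M → ∞`. -/
theorem PT_scaling_with_M
    (ε Eu σ L NZC NRS NSC αi : ℝ)
    (hε : 0 < ε) (hEu : 0 < Eu) (hσ : 0 < σ) (hL : 0 < L)
    (hNZC : 0 < NZC) (hNRS : 0 < NRS) (hNSC : 0 < NSC) (hαi : 0 < αi)
    (K : ℕ) (hK : 1 ≤ K) (α : Fin K → ℝ) (hα : ∀ q, 0 < α q)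
    (A B : ℝ)
    (hA : A = ∑ q : Fin K, α q / αi)
    (hB : B = ∑ q : Fin K, α q / αi ^ 2)
    (γd PT : ℝ → ℝ)
    (hγd : ∀ M : ℝ, 0 < M →
      γd M = (B / (M * NRS) + L / (Real.sqrt M * Eu * NRS ^ 2 * NZC * αi ^ 2)) /
        (1 / ε - A / M - L / (Real.sqrt M * Eu * NRS * NZC * αi)))
    (hPT : ∀ M : ℝ, 0 < M → PT M = (NSC * σ ^ 2 / NRS) * γd M) :
    Tendsto (fun M : ℝ => Real.sqrt M * PT M) atTop
      (nhds (L * NSC * ε * σ ^ 2 / (Eu * NRS ^ 3 * NZC * αi ^ 2))) := by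
  clear hA hB
  have ht : Tendsto (fun M : ℝ => (Real.sqrt M)⁻¹) atTop (nhds 0) :=
    tendsto_inv_atTop_zero.comp Real.tendsto_sqrt_atTop
  have hc : ContinuousAt (fun t : ℝ => (NSC * σ ^ 2 / NRS) *
      ((B / NRS * t + L / (Eu * NRS ^ 2 * NZC * αi ^ 2)) /
        (1 / ε - A * t ^ 2 - L / (Eu * NRS * NZC * αi) * t))) 0 := by
    refine ContinuousAt.mul continuousAt_const (ContinuousAt.div (by fun_prop) (by fun_prop) ?_)
    simp [hε.ne']
  have h := hc.tendsto.comp ht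
  have e : (NSC * σ ^ 2 / NRS) *
      ((B / NRS * 0 + L / (Eu * NRS ^ 2 * NZC * αi ^ 2)) /
        (1 / ε - A * 0 ^ 2 - L / (Eu * NRS * NZC * αi) * 0))
      = L * NSC * ε * σ ^ 2 / (Eu * NRS ^ 3 * NZC * αi ^ 2) := by
    rw [mul_zero, mul_zero, zero_pow two_ne_zero, mul_zero, zero_add, sub_zero, sub_zero]
    field_simp
  rw [e] at h
  refine h.congr' ?_
  filter_upwards [eventually_gt_atTop 0] with M hM
  rw [hPT M hM, hγd M hM]
  have hs : 0 < Real.sqrt M := Real.sqrt_pos.2 hM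
  have hM2 : M = Real.sqrt M ^ 2 := (Real.sq_sqrt hM.le).symm
  simp only [Function.comp]
  generalize Real.sqrt M = s at *
  subst hM2
  have e1 : 1 / ε - A * s⁻¹ ^ 2 - L / (Eu * NRS * NZC * αi) * s⁻¹
      = 1 / ε - A / s ^ 2 - L / (s * Eu * NRS * NZC * αi) := by
    field_simp
  have e2 : B / NRS * s⁻¹ + L / (Eu * NRS ^ 2 * NZC * αi ^ 2)
      = s * (B / (s ^ 2 * NRS) + L / (s * Eu * NRS ^ 2 * NZC * αi ^ 2)) := by
    field_simp
  rw [e1, e2]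
  ring
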